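/- Let A be a finitely generated commutative unital ℝ-algebra, let I be an ideal of A, and let L : A → ℝ be a linear functional such that L(a²) ≥ 0 for all a ∈ A and L(b) = 0 for all b ∈ I. If f ∈ A satisfies χ(f) = 0 for every unital ℝ-algebra homomorphism χ : A → ℝ that vanishes on I, then L(f) = 0. In particular, a linear functional on A that is nonnegative on all squares and vanishes on I also vanishes on the ideal Î := {f ∈ A : χ(f) = 0 for every character χ vanishing on I}. -/

import Mathlib

/-!
Let `N` be the radical of the positive semidefinite form `(a, b) ↦ L (a * b)`. By Cauchy–Schwarz it
consists of the `a` with `L (a ^ 2) = 0`; it is an ideal containing `I`, and `A ⧸ N` is formally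
real. If the image of `f` there were nonzero, it would survive in the localization at some minimal
prime, which is a field in which `-1` is not a sum of squares, and hence in a real closed field `R`.

It remains to specialize an algebra homomorphism `A → R` that inverts `f` to a character. Replace
the generators of the image by elements of smaller and smaller real closed fields: the cut which
`x : R` makes in a real closed subfield `k` is realized in an ultrapower of `k`, since only finitely
many roots matter for each polynomial, and a sign-preserving correspondence extends to roots of
polynomials, so `k(x)` has a relative real closure mapping to the ultrapower. A finitely presented
algebra that maps to an ultrapower of `k` maps to `k`.
-/

namespace RealRadical

open Polynomial

universe u v

/-! ### Polynomials over real closed fields -/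

/-- The intermediate value property for polynomials over an ordered field. It is equivalent to
`IsRealClosed` and takes its place here because it passes directly to ultrapowers and to relatively
algebraically closed subfields. -/
class HasPolynomialIVT (R : Type*) [Field R] [LinearOrder R] : Prop where
  exists_root_of_mul_neg : ∀ (p : R[X]) {a b : R}, a < b → p.eval a * p.eval b < 0 →
    ∃ c ∈ Set.Ioo a b, p.eval c = 0

instance hasPolynomialIVT_real : HasPolynomialIVT ℝ where
  exists_root_of_mul_neg p a b hab h := by
    have hcont : ContinuousOn (fun x => p.eval x) (Set.Icc a b) := p.continuous.continuousOn
    rcases mul_neg_iff.mp h with ⟨ha, hb⟩ | ⟨ha, hb⟩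
    · exact intermediate_value_Ioo' hab.le hcont ⟨hb, ha⟩
    · exact intermediate_value_Ioo hab.le hcont ⟨ha, hb⟩

instance hasPolynomialIVT_germ {α k : Type*} [Field k] [LinearOrder k] [HasPolynomialIVT k]
    (U : Ultrafilter α) : HasPolynomialIVT ((U : Filter α).Germ k) where
  exists_root_of_mul_neg p a b hab h := by
    obtain ⟨P, rfl⟩ := Polynomial.map_surjective (Filter.Germ.coeRingHom (U : Filter α) (R := k))
      (fun g => g.inductionOn fun f => ⟨f, rfl⟩) p
    have heval (c : α → k) :
        (P.map (Filter.Germ.coeRingHom (U : Filter α))).eval (c : Filter.Germ _ k) =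
          ((fun i => (P.map (Pi.evalRingHom (fun _ => k) i)).eval (c i) : α → k) :
            Filter.Germ _ k) := by
      have h (i : α) : (P.map (Pi.evalRingHom (fun _ => k) i)).eval (c i) = P.eval c i :=
        eval_map_apply (Pi.evalRingHom (fun _ => k) i) c
      simp only [h]
      exact eval_map_apply (Filter.Germ.coeRingHom (U : Filter α)) c
    induction a using Filter.Germ.inductionOn with | _ a
    induction b using Filter.Germ.inductionOn with | _ b
    rw [heval, heval, ← Filter.Germ.coe_mul, ← Filter.Germ.coe_zero, Filter.Germ.coe_lt] at h
    have hroot : ∀ᶠ i in U, ∃ c ∈ Set.Ioo (a i) (b i),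
        (P.map (Pi.evalRingHom (fun _ => k) i)).eval c = 0 := by
      filter_upwards [Filter.Germ.coe_lt.mp hab, h] with i hi hsign
      exact HasPolynomialIVT.exists_root_of_mul_neg _ hi hsign
    obtain ⟨c, hc⟩ := hroot.choice
    refine ⟨c, ⟨Filter.Germ.coe_lt.mpr (hc.mono fun i hi => hi.1.1),
      Filter.Germ.coe_lt.mpr (hc.mono fun i hi => hi.1.2)⟩, ?_⟩
    rw [heval]
    exact Filter.Germ.coe_eq.mpr (hc.mono fun i hi => hi.2)

section Field

variable {R : Type*} [Field R] [LinearOrder R] [IsStrictOrderedRing R] [HasPolynomialIVT R]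

theorem isSquare_of_nonneg {a : R} (ha : 0 ≤ a) : IsSquare a := by
  rcases ha.eq_or_lt with rfl | ha
  · exact IsSquare.zero
  have hsign : (X ^ 2 - C a : R[X]).eval 0 * (X ^ 2 - C a : R[X]).eval (a + 1) < 0 := by
    simp only [eval_sub, eval_pow, eval_X, eval_C]
    nlinarith [sq_nonneg a, mul_pos ha ha]
  obtain ⟨c, -, hc⟩ := HasPolynomialIVT.exists_root_of_mul_neg _ (by linarith) hsign
  exact ⟨c, by simpa [sub_eq_zero, sq, eq_comm] using hc⟩

theorem sign_ringHom {S : Type*} [Field S] [LinearOrder S] [IsStrictOrderedRing S] (f : R →+* S)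
    (a : R) : SignType.sign (f a) = SignType.sign a := by
  have hpos {a : R} (ha : 0 < a) : 0 < f a := by
    obtain ⟨b, rfl⟩ := isSquare_of_nonneg ha.le
    rw [map_mul]
    exact mul_self_pos.mpr ((map_ne_zero f).mpr (by rintro rfl; simp at ha))
  rcases lt_trichotomy a 0 with ha | rfl | ha
  · rw [sign_neg ha, sign_neg (by simpa using hpos (neg_pos.mpr ha))]
  · simp
  · rw [sign_pos ha, sign_pos (hpos ha)]

theorem sign_eval_eq_of_forall_ne_zero {p : R[X]} {a b : R} (hab : a ≤ b)
    (h : ∀ c ∈ Set.Icc a b, p.eval c ≠ 0) :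
    SignType.sign (p.eval a) = SignType.sign (p.eval b) := by
  have hnonneg : 0 ≤ p.eval a * p.eval b := by
    by_contra! hneg
    have hlt : a < b := hab.lt_of_ne (by rintro rfl; exact (mul_self_nonneg _).not_gt hneg)
    obtain ⟨c, hc, hc0⟩ := HasPolynomialIVT.exists_root_of_mul_neg p hlt hneg
    exact h c (Set.Ioo_subset_Icc_self hc) hc0
  have hpos : 0 < p.eval a * p.eval b := hnonneg.lt_of_ne'
    (mul_ne_zero (h a (Set.left_mem_Icc.mpr hab)) (h b (Set.right_mem_Icc.mpr hab)))
  rcases mul_pos_iff.mp hpos with ⟨ha, hb⟩ | ⟨ha, hb⟩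
  · rw [sign_pos ha, sign_pos hb]
  · rw [sign_neg ha, sign_neg hb]

theorem exists_derivative_eval_eq_zero {p : R[X]} {a b : R} (hab : a < b) (ha : p.eval a = 0)
    (hb : p.eval b = 0) : ∃ c ∈ Set.Icc a b, p.derivative.eval c = 0 := by
  rcases eq_or_ne p 0 with rfl | hp
  · exact ⟨a, Set.left_mem_Icc.mpr hab.le, by simp⟩
  -- With `r` the next root after `a`, write `p = (X - a) (X - r) q`. Unless `q` vanishes at an
  -- endpoint it has constant sign on `[a, r]`, and then the derivative has opposite
  -- signs at `a` and `r`.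
  have hne : (p.roots.toFinset.filter fun c => a < c).Nonempty := ⟨b, by simp [hp, hb, hab]⟩
  obtain ⟨r, hr, hmin⟩ := Finset.exists_min_image _ id hne
  simp only [Finset.mem_filter, Multiset.mem_toFinset, mem_roots hp, IsRoot.def, id] at hr hmin
  obtain ⟨s, rfl⟩ := dvd_iff_isRoot.mpr ha
  have hsr : s.eval r = 0 := by
    simpa [sub_eq_zero, hr.2.ne'] using hr.1
  obtain ⟨q, rfl⟩ := dvd_iff_isRoot.mpr hsr
  have hrb : r ≤ b := hmin b ⟨hb, hab⟩
  by_contra! h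
  have hqa : q.eval a ≠ 0 := fun h0 => h a (Set.left_mem_Icc.mpr hab.le) (by simp [h0])
  have hqr : q.eval r ≠ 0 := fun h0 => h r ⟨hr.2.le, hrb⟩ (by simp [h0])
  have hsign : SignType.sign (q.eval a) = SignType.sign (q.eval r) := by
    refine sign_eval_eq_of_forall_ne_zero hr.2.le fun c hc hc0 => ?_
    rcases hc.1.eq_or_lt with rfl | hac
    · exact hqa hc0
    · exact hqr (le_antisymm hc.2 (hmin c ⟨by simp [hc0], hac⟩) ▸ hc0)
  have hneg : ((X - C a) * ((X - C r) * q)).derivative.eval a *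
      ((X - C a) * ((X - C r) * q)).derivative.eval r < 0 := by
    have hpos : 0 < q.eval a * q.eval r := by
      rw [← sign_eq_one_iff, sign_mul, hsign, ← sign_mul]
      exact sign_pos (mul_self_pos.mpr hqr)
    simp only [derivative_mul, derivative_sub, derivative_X, derivative_C, eval_add, eval_mul,
      eval_sub, eval_X, eval_C, eval_one, eval_zero, sub_self]
    nlinarith [mul_pos hpos (pow_pos (sub_pos.mpr hr.2) 2)]
  obtain ⟨c, hc, hc0⟩ := HasPolynomialIVT.exists_root_of_mul_neg _ hr.2 hneg
  exact h c ⟨hc.1.le, hc.2.le.trans hrb⟩ hc0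

end Field

/-! ### Real closures of semireal fields -/

section SumsOfSquares

variable {R S : Type*} [NonAssocSemiring R] [NonAssocSemiring S]

theorem isSumSq_map (f : R →+* S) {s : R} (hs : IsSumSq s) : IsSumSq (f s) := by
  induction hs with
  | zero => simp
  | sq_add a _ ih => simpa using IsSumSq.sq_add (f a) ih

theorem exists_isSumSq_of_surjective {f : R →+* S} (hf : Function.Surjective f) {s : S}
    (hs : IsSumSq s) : ∃ r, IsSumSq r ∧ f r = s := by
  induction hs with
  | zero => exact ⟨0, .zero, map_zero f⟩
  | sq_add a _ ih =>
    obtain ⟨b, rfl⟩ := hf a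
    obtain ⟨r, hr, rfl⟩ := ih
    exact ⟨b * b + r, .sq_add b hr, by simp⟩

theorem isSemireal_of_ringHom [IsSemireal S] (f : R →+* S) : IsSemireal R where
  one_add_ne_zero hs h := IsSemireal.one_add_ne_zero (isSumSq_map f hs) (by simpa using congr(f $h))

theorem exists_re_eq_of_isSumSq {R : Type*} [CommRing R] {x : R} {z : QuadraticAlgebra R x 0}
    (hz : IsSumSq z) : ∃ s t, IsSumSq s ∧ IsSumSq t ∧ z.re = s + x * t := by
  induction hz with
  | zero => exact ⟨0, 0, .zero, .zero, by simp⟩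
  | sq_add a _ ih =>
    obtain ⟨s, t, hs, ht, h⟩ := ih
    refine ⟨a.re * a.re + s, a.im * a.im + t, hs.sq_add _, ht.sq_add _, ?_⟩
    simp only [QuadraticAlgebra.re_add, QuadraticAlgebra.re_mul, h]
    ring

theorem eval_nonneg_of_isSumSq {F : Type*} [CommRing F] [LinearOrder F] [IsStrictOrderedRing F]
    {w : F[X]} (hw : IsSumSq w) (a : F) : 0 ≤ w.eval a :=
  (isSumSq_map (evalRingHom a) hw).nonneg

theorem exists_isSumSq_dvd_sub_natDegree_le {F : Type*} [Field F] {p : F[X]} (hp : 0 < p.natDegree)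
    {w : F[X]} (hw : IsSumSq w) :
    ∃ v, IsSumSq v ∧ p ∣ w - v ∧ v.natDegree ≤ 2 * (p.natDegree - 1) := by
  induction hw with
  | zero => exact ⟨0, .zero, by simp, by simp⟩
  | @sq_add h s _ ih =>
    obtain ⟨v, hv, hdvd, hdeg⟩ := ih
    refine ⟨h % p * (h % p) + v, hv.sq_add _, ?_, ?_⟩
    · have hmod : p ∣ h - h % p := ⟨h / p, by linear_combination -EuclideanDomain.div_add_mod h p⟩
      have : h * h + s - (h % p * (h % p) + v) = (h - h % p) * (h + h % p) + (s - v) := by ring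
      exact this ▸ (hmod.mul_right _).add hdvd
    · have hlt := natDegree_mod_lt h hp.ne'
      refine (natDegree_add_le _ _).trans (max_le ?_ hdeg)
      exact natDegree_mul_le.trans (by lia)

/-- Modulo `p` the sum of squares can be taken of small degree, so that `1 + w = p * q` with
`q.natDegree < p.natDegree`. As `p` and `q` have the same sign everywhere, one descends to `q`. -/
theorem eval_mul_eval_nonneg_of_dvd_one_add {F : Type*} [Field F] [LinearOrder F]
    [IsStrictOrderedRing F] {p w : F[X]} (hw : IsSumSq w) (hdvd : p ∣ 1 + w) (a b : F) :
    0 ≤ p.eval a * p.eval b := by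
  induction hn : p.natDegree using Nat.strong_induction_on generalizing p w with | _ n ih
  rcases Nat.eq_zero_or_pos p.natDegree with hp0 | hp0
  · rw [eq_C_of_natDegree_eq_zero hp0, eval_C, eval_C]
    exact mul_self_nonneg _
  obtain ⟨v, hv, hpv, hdeg⟩ := exists_isSumSq_dvd_sub_natDegree_le hp0 hw
  obtain ⟨q, hq⟩ : p ∣ 1 + v := by
    have : 1 + w - (w - v) = 1 + v := by ring
    exact this ▸ hdvd.sub hpv
  have hpos (c : F) : 0 < p.eval c * q.eval c := by
    rw [← eval_mul, ← hq, eval_add, eval_one]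
    linarith [eval_nonneg_of_isSumSq hv c]
  have hq_lt : q.natDegree < n := by
    have hne : p * q ≠ 0 := fun h0 => (hpos 0).ne' (by rw [← eval_mul, h0, eval_zero])
    have hsum : p.natDegree + q.natDegree ≤ 2 * (p.natDegree - 1) := by
      rw [← natDegree_mul (left_ne_zero_of_mul hne) (right_ne_zero_of_mul hne), ← hq]
      exact (natDegree_add_le _ _).trans (by simpa using hdeg)
    lia
  have hqab := ih _ hq_lt hv (Dvd.intro_left p hq.symm) rfl
  by_contra! hneg
  nlinarith [mul_pos (hpos a) (hpos b), mul_nonneg hqab (neg_nonneg.mpr hneg.le)]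

end SumsOfSquares

section RealClosure

/-- No proper simple algebraic extension of `F` is semireal. Together with `IsSemireal F` this is
the extension-theoretic characterisation of real closed fields. -/
def NoSemirealExtension (F : Type*) [Field F] : Prop :=
  ∀ p : F[X], Irreducible p → p.natDegree ≠ 1 → ¬ IsSemireal (AdjoinRoot p)

namespace NoSemirealExtension

variable {F : Type*} [Field F]

theorem exists_dvd_one_add (hF : NoSemirealExtension F) {p : F[X]} (hp : Irreducible p)
    (hdeg : p.natDegree ≠ 1) : ∃ w, IsSumSq w ∧ p ∣ 1 + w := by
  have hneg := hF p hp hdeg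
  rw [isSemireal_iff_not_isSumSq_neg_one, not_not] at hneg
  obtain ⟨w, hw, h⟩ := exists_isSumSq_of_surjective AdjoinRoot.mk_surjective hneg
  exact ⟨w, hw, AdjoinRoot.mk_eq_zero.mp (by simp [h])⟩

theorem hasPolynomialIVT (hF : NoSemirealExtension F) [LinearOrder F] [IsStrictOrderedRing F] :
    HasPolynomialIVT F where
  exists_root_of_mul_neg p a b hab h := by
    induction p using WfDvdMonoid.induction_on_irreducible with
    | zero => simp at h
    | unit u hu =>
      obtain ⟨c, -, rfl⟩ := Polynomial.isUnit_iff.mp hu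
      simp only [eval_C] at h
      exact absurd h (mul_self_nonneg c).not_gt
    | mul q p _ hp ih =>
      by_cases hpneg : p.eval a * p.eval b < 0
      · have hdeg : p.natDegree = 1 := by
          by_contra hdeg
          obtain ⟨w, hw, hdvd⟩ := hF.exists_dvd_one_add hp hdeg
          exact (eval_mul_eval_nonneg_of_dvd_one_add hw hdvd a b).not_gt hpneg
        obtain ⟨c, hc, d, rfl⟩ := natDegree_eq_one.mp hdeg
        obtain ⟨r, rfl⟩ : ∃ r, d = -(c * r) := ⟨-d / c, by field_simp⟩
        simp only [eval_add, eval_mul, eval_C, eval_X] at hpneg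
        have hr : (a - r) * (b - r) < 0 := by
          have := mul_self_pos.mpr hc
          by_contra! hr
          nlinarith [mul_nonneg this.le hr]
        refine ⟨r, ?_, by simp⟩
        rcases mul_neg_iff.mp hr with ⟨h₁, h₂⟩ | ⟨h₁, h₂⟩
        · linarith
        · exact ⟨sub_neg.mp h₁, sub_pos.mp h₂⟩
      · obtain ⟨c, hc, hc0⟩ := ih (by simp only [eval_mul] at h; nlinarith)
        exact ⟨c, hc, by simp [hc0]⟩

variable [IsSemireal F]

theorem eq_zero_of_isSumSq_of_neg {x : F} (hx : IsSumSq x) (hneg : IsSumSq (-x)) : x = 0 := by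
  by_contra hx0
  refine IsSemireal.not_isSumSq_neg_one F ?_
  have : -x * x * (x⁻¹ * x⁻¹) = -1 := by field_simp
  exact this ▸ (hneg.mul hx).mul (IsSumSq.mul_self x⁻¹)

theorem isSquare_or_isSumSq_neg (hF : NoSemirealExtension F) (x : F) :
    IsSquare x ∨ IsSumSq (-x) := by
  refine or_iff_not_imp_left.mpr fun hx => ?_
  have hirr : Irreducible (X ^ 2 - C x : F[X]) := by
    refine X_pow_sub_C_irreducible_of_prime Nat.prime_two fun b hb => hx ⟨b, ?_⟩
    rw [← hb, sq]
  obtain ⟨w, hw, hdvd⟩ := hF.exists_dvd_one_add hirr (by simp)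
  obtain ⟨s, t, hs, ht, hre⟩ := exists_re_eq_of_isSumSq
    (isSumSq_map (aeval (QuadraticAlgebra.omega : QuadraticAlgebra F x 0)).toRingHom hw)
  have hst : 1 + (s + x * t) = 0 := by
    obtain ⟨q, hq⟩ := hdvd
    have h := congr((aeval (QuadraticAlgebra.omega : QuadraticAlgebra F x 0) $hq).re)
    have hω : aeval (QuadraticAlgebra.omega : QuadraticAlgebra F x 0) (X ^ 2 - C x) = 0 := by
      simp [sq, QuadraticAlgebra.omega_mul_omega_eq_algebraMap]
    rw [map_add, map_one, map_mul, hω, zero_mul, QuadraticAlgebra.re_add, QuadraticAlgebra.re_one,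
      QuadraticAlgebra.re_zero] at h
    exact hre ▸ h
  have ht0 : t ≠ 0 := by
    rintro rfl
    exact IsSemireal.one_add_ne_zero hs (by simpa using hst)
  have : (1 + s) * t * (t⁻¹ * t⁻¹) = -x := by
    field_simp
    linear_combination hst
  exact this ▸ ((IsSumSq.one.add hs).mul ht).mul (IsSumSq.mul_self t⁻¹)

theorem exists_linearOrder (hF : NoSemirealExtension F) :
    ∃ _ : LinearOrder F, IsStrictOrderedRing F := by
  let cone : RingCone F :=
    { Subsemiring.sumSq F with
      eq_zero_of_mem_of_neg_mem' := fun {x} hx hneg =>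
        eq_zero_of_isSumSq_of_neg (x := x) (Subsemiring.mem_sumSq.mp hx)
          (Subsemiring.mem_sumSq.mp hneg) }
  have : HasMemOrNegMem cone :=
    ⟨fun x => (hF.isSquare_or_isSumSq_neg x).imp (fun h => Subsemiring.mem_sumSq.mpr h.isSumSq)
      Subsemiring.mem_sumSq.mpr⟩
  classical
  let := LinearOrder.mkOfAddGroupCone cone
  have := IsOrderedRing.mkOfCone cone
  exact ⟨inferInstance, IsOrderedRing.toIsStrictOrderedRing F⟩

end NoSemirealExtension

theorem isSemireal_sSup {Ω : Type*} [Field Ω] {c : Set (Subfield Ω)} (hne : c.Nonempty)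
    (hc : DirectedOn (· ≤ ·) c) (h : ∀ E ∈ c, IsSemireal E) : IsSemireal ↥(sSup c) := by
  have hdescend {s : ↥(sSup c)} (hs : IsSumSq s) : ∃ E ∈ c, ∃ t : E, IsSumSq t ∧ (t : Ω) = s := by
    induction hs with
    | zero => exact hne.imp fun E hE => ⟨hE, 0, .zero, rfl⟩
    | sq_add a _ ih =>
      obtain ⟨E, hE, t, ht, hts⟩ := ih
      obtain ⟨E', hE', ha⟩ := (Subfield.mem_sSup_of_directedOn hne hc).mp a.2
      obtain ⟨G, hG, hEG, hE'G⟩ := hc E hE E' hE'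
      refine ⟨G, hG, ⟨a, hE'G ha⟩ * ⟨a, hE'G ha⟩ + Subfield.inclusion hEG t,
        (isSumSq_map (Subfield.inclusion hEG) ht).sq_add _, ?_⟩
      simp [← hts, Subfield.inclusion]
  refine .of_not_isSumSq_neg_one fun hneg => ?_
  obtain ⟨E, hE, t, ht, hts⟩ := hdescend hneg
  have := h E hE
  have ht1 : t = -1 := Subtype.ext (by simpa using hts)
  exact IsSemireal.not_isSumSq_neg_one E (ht1 ▸ ht)

theorem noSemirealExtension_of_maximal {Ω : Type*} [Field Ω] [IsAlgClosed Ω] {E : Subfield Ω}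
    (hE : Maximal (fun E : Subfield Ω => IsSemireal E) E) : NoSemirealExtension E := by
  intro p hp hdeg hreal
  have : Fact (Irreducible p) := ⟨hp⟩
  obtain ⟨α, hα⟩ := IsAlgClosed.exists_eval₂_eq_zero E.subtype p
    hp.degree_pos.ne'
  let ev : AdjoinRoot p →+* Ω := AdjoinRoot.lift E.subtype α hα
  have hle : E ≤ ev.fieldRange := fun x hx => ⟨AdjoinRoot.of p ⟨x, hx⟩, by simp [ev]⟩
  have hev : IsSemireal ev.fieldRange :=
    isSemireal_of_ringHom ev.rangeRestrictFieldEquiv.symm.toRingHom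
  have hαE : α ∈ E := hE.le_of_ge hev hle ⟨AdjoinRoot.root p, by simp [ev]⟩
  have hroot : p.IsRoot ⟨α, hαE⟩ :=
    E.subtype.injective ((eval₂_at_apply E.subtype _).symm.trans (hα.trans (map_zero _).symm))
  exact hdeg (natDegree_eq_of_degree_eq_some (degree_eq_one_of_irreducible_of_root hp hroot))

theorem exists_ringHom_hasPolynomialIVT {K : Type u} [Field K] [IsSemireal K] :
    ∃ (R : Type u) (_ : Field R) (_ : LinearOrder R) (_ : IsStrictOrderedRing R),
      HasPolynomialIVT R ∧ Nonempty (K →+* R) := by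
  let ι := algebraMap K (AlgebraicClosure K)
  have hK : IsSemireal ι.fieldRange :=
    isSemireal_of_ringHom ι.rangeRestrictFieldEquiv.symm.toRingHom
  obtain ⟨E, hKE, hE⟩ := zorn_le_nonempty₀ {E : Subfield (AlgebraicClosure K) | IsSemireal E}
    (fun c hc hchain E hE => ⟨sSup c, isSemireal_sSup ⟨E, hE⟩ hchain.directedOn hc,
      fun _ => le_sSup⟩) ι.fieldRange hK
  have hmax := noSemirealExtension_of_maximal hE
  have hreal : IsSemireal E := hE.prop
  obtain ⟨_, hord⟩ := hmax.exists_linearOrder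
  exact ⟨E, inferInstance, inferInstance, hord, hmax.hasPolynomialIVT,
    ⟨ι.codRestrict E fun x => hKE ⟨x, rfl⟩⟩⟩

end RealClosure

/-! ### Extension of sign-preserving correspondences -/

/-- Two homomorphisms to ordered fields have the same signs when they induce the same preorder on
their common source, so that the images are isomorphic as ordered rings. -/
def SameSigns {D R S : Type*} [CommRing D] [Field R] [LinearOrder R] [Field S] [LinearOrder S]
    (φ : D →+* R) (ψ : D →+* S) : Prop :=
  ∀ a, SignType.sign (φ a) = SignType.sign (ψ a)

namespace SameSigns

variable {D R S : Type*} [CommRing D] [Field R] [LinearOrder R] [Field S] [LinearOrder S]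
  {φ : D →+* R} {ψ : D →+* S}

theorem symm (hs : SameSigns φ ψ) : SameSigns ψ φ :=
  fun a => (hs a).symm

theorem neg_iff (hs : SameSigns φ ψ) {a : D} : φ a < 0 ↔ ψ a < 0 := by
  rw [← sign_eq_neg_one_iff, hs a, sign_eq_neg_one_iff]

theorem lt_iff [IsStrictOrderedRing R] [IsStrictOrderedRing S] (hs : SameSigns φ ψ) {a b : D} :
    φ a < φ b ↔ ψ a < ψ b := by
  rw [← sub_neg, ← map_sub, hs.neg_iff, map_sub, sub_neg]

end SameSigns

/-- Every root of `h`, evaluated along `φ`, already comes from the source of `φ`. -/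
def RootsInRange {F R : Type*} [Field F] [Field R] (φ : F →+* R) (h : F[X]) : Prop :=
  ∀ θ, h.eval₂ φ θ = 0 → θ ∈ φ.range

namespace RootsInRange

variable {F R : Type*} [Field F] [Field R] {φ : F →+* R}

theorem of_mul_left {p q : F[X]} (h : RootsInRange φ (p * q)) : RootsInRange φ q :=
  fun θ hθ => h θ (by rw [eval₂_mul, hθ, mul_zero])

theorem isRoot_of_eval₂_eq_zero {h : F[X]} (hr : RootsInRange φ h) {θ : R}
    (hθ : h.eval₂ φ θ = 0) : ∃ e, h.IsRoot e ∧ φ e = θ := by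
  obtain ⟨e, rfl⟩ := hr θ hθ
  exact ⟨e, φ.injective (by rw [map_zero, ← hθ, eval₂_at_apply]), rfl⟩

end RootsInRange

section Isolation

variable {F R S : Type*} [Field F] [Field R] [LinearOrder R] [IsStrictOrderedRing R]
  [Field S] [LinearOrder S] [IsStrictOrderedRing S]

theorem exists_le_abs_eval₂ (φ : F →+* R) {h : F[X]} (hdeg : 0 < h.degree) (m : F) :
    ∃ b : F, ∀ θ, φ b ≤ |θ| → φ m ≤ |h.eval₂ φ θ| := by
  have le_sq_add_one (x : R) : |x| ≤ x ^ 2 + 1 := by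
    nlinarith [sq_nonneg (|x| - 1), sq_abs x, abs_nonneg x]
  revert m
  refine degree_pos_induction_on h hdeg (fun {a} ha m => ?_) (fun {p} _ ih m => ?_)
    (fun {p a} _ ih m => ?_)
  · refine ⟨(m / a) ^ 2 + 1, fun θ hθ => ?_⟩
    have hθ' : |φ m / φ a| ≤ |θ| := (le_sq_add_one _).trans (by simpa using hθ)
    rw [abs_div, div_le_iff₀ (abs_pos.mpr ((map_ne_zero φ).mpr ha))] at hθ'
    rw [eval₂_mul, eval₂_C, eval₂_X, abs_mul, mul_comm]
    exact (le_abs_self _).trans hθ'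
  · obtain ⟨b, hb⟩ := ih m
    refine ⟨b ^ 2 + 1, fun θ hθ => ?_⟩
    simp only [map_add, map_pow, map_one] at hθ
    have hθ1 : 1 ≤ |θ| := by nlinarith [sq_nonneg (φ b)]
    have hp := hb θ (((le_abs_self _).trans (le_sq_add_one _)).trans hθ)
    rw [eval₂_mul, eval₂_X, abs_mul]
    exact hp.trans (le_mul_of_one_le_right (abs_nonneg _) hθ1)
  · obtain ⟨b, hb⟩ := ih (m + (a ^ 2 + 1))
    refine ⟨b, fun θ hθ => ?_⟩
    have hp := hb θ hθ
    simp only [map_add, map_pow, map_one] at hp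
    rw [eval₂_add, eval₂_C]
    linarith [abs_sub_abs_le_abs_add (p.eval₂ φ θ) (φ a), le_sq_add_one (φ a)]

theorem exists_abs_lt_of_eval₂_eq_zero {φ : F →+* R} {h : F[X]} (hh : h ≠ 0) {θ : R}
    (hθ : h.eval₂ φ θ = 0) : ∃ b, |θ| < φ b := by
  have hdeg : 0 < h.degree := degree_pos_of_eval₂_root hh φ hθ (by simp)
  obtain ⟨b, hb⟩ := exists_le_abs_eval₂ φ hdeg 1
  refine ⟨b, lt_of_not_ge fun hle => ?_⟩
  have := hb θ hle
  rw [hθ, abs_zero, map_one] at this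
  exact this.not_gt one_pos

theorem exists_isolating_interval {φ : F →+* R} {θ : R} (hθ : θ ∉ φ.range) {b : F}
    (hb : |θ| < φ b) (s : Finset F) :
    ∃ c d, φ c < θ ∧ θ < φ d ∧ ∀ e ∈ s, φ c < φ e → φ d ≤ φ e := by
  classical
  obtain ⟨hlo, hhi⟩ := abs_lt.mp hb
  obtain ⟨c, hc, hcmax⟩ := ((insert (-b) s).filter fun e => φ e < θ).exists_max_image φ
    ⟨-b, by simpa using hlo⟩
  obtain ⟨d, hd, hdmin⟩ := ((insert b s).filter fun e => θ < φ e).exists_min_image φ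
    ⟨b, by simpa using hhi⟩
  simp only [Finset.mem_filter] at hc hcmax hd hdmin
  refine ⟨c, d, hc.2, hd.2, fun e he hce => ?_⟩
  rcases lt_trichotomy (φ e) θ with hlt | heq | hgt
  · exact absurd (hcmax e ⟨Finset.mem_insert_of_mem he, hlt⟩) hce.not_ge
  · exact absurd ⟨e, heq⟩ hθ
  · exact hdmin e ⟨Finset.mem_insert_of_mem he, hgt⟩

variable [HasPolynomialIVT R] [HasPolynomialIVT S]

theorem sign_eval₂_eq_sign_of_forall_ne_zero {φ : F →+* R} {h : F[X]}
    (hne : ∀ θ, h.eval₂ φ θ ≠ 0) (θ : R) :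
    SignType.sign (h.eval₂ φ θ) = SignType.sign (φ (h.eval 0)) := by
  simp only [← eval_map] at hne ⊢
  rw [← eval_map_apply, map_zero]
  rcases le_total θ 0 with hθ | hθ
  · exact sign_eval_eq_of_forall_ne_zero hθ fun c _ => hne c
  · exact (sign_eval_eq_of_forall_ne_zero hθ fun c _ => hne c).symm

theorem SameSigns.sign_eval₂_eq {φ : F →+* R} {ψ : F →+* S} (hs : SameSigns φ ψ) {h : F[X]}
    (hφ : RootsInRange φ h) (hψ : RootsInRange ψ h) {θ : R} {η : S}
    (hcut : ∀ e, h.IsRoot e → (φ e < θ ∧ ψ e < η) ∨ (θ < φ e ∧ η < ψ e)) :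
    SignType.sign (h.eval₂ φ θ) = SignType.sign (h.eval₂ ψ η) := by
  rcases eq_or_ne h 0 with rfl | h0
  · simp
  induction hn : h.natDegree using Nat.strong_induction_on generalizing h with | _ n ih
  by_cases hroot : ∃ e, h.IsRoot e
  · obtain ⟨e, he⟩ := hroot
    obtain ⟨q, rfl⟩ := dvd_iff_isRoot.mpr he
    have hq0 : q ≠ 0 := right_ne_zero_of_mul h0
    have hlt : q.natDegree < n := by
      rw [← hn, natDegree_mul (X_sub_C_ne_zero e) hq0, natDegree_X_sub_C]
      lia
    have hlin : SignType.sign (θ - φ e) = SignType.sign (η - ψ e) := by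
      rcases hcut e he with ⟨h₁, h₂⟩ | ⟨h₁, h₂⟩
      · rw [sign_pos (sub_pos.mpr h₁), sign_pos (sub_pos.mpr h₂)]
      · rw [sign_neg (sub_neg.mpr h₁), sign_neg (sub_neg.mpr h₂)]
    have hq := ih _ hlt hφ.of_mul_left hψ.of_mul_left
      (fun e' he' => hcut e' (by simp [he'.eq_zero])) hq0 rfl
    simp only [eval₂_mul, eval₂_sub, eval₂_X, eval₂_C, sign_mul, hlin, hq]
  · have hneφ (x : R) (hx : h.eval₂ φ x = 0) : False :=
      hroot ((hφ.isRoot_of_eval₂_eq_zero hx).imp fun _ => And.left)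
    have hneψ (x : S) (hx : h.eval₂ ψ x = 0) : False :=
      hroot ((hψ.isRoot_of_eval₂_eq_zero hx).imp fun _ => And.left)
    rw [sign_eval₂_eq_sign_of_forall_ne_zero hneφ, sign_eval₂_eq_sign_of_forall_ne_zero hneψ, hs]

theorem eq_of_eval₂_eq_zero_of_isolating {φ : F →+* R} {g : F[X]} {c d : F}
    (hder : RootsInRange φ (derivative g))
    (hiso : ∀ e, (derivative g).IsRoot e → φ c < φ e → φ d ≤ φ e) {θ θ' : R}
    (hθ : θ ∈ Set.Ioo (φ c) (φ d)) (hθ' : θ' ∈ Set.Ioo (φ c) (φ d)) (hg : g.eval₂ φ θ = 0)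
    (hg' : g.eval₂ φ θ' = 0) : θ = θ' := by
  wlog hlt : θ < θ' generalizing θ θ'
  · by_contra hne
    exact hne (this hθ' hθ hg' hg (lt_of_le_of_ne (not_lt.mp hlt) (Ne.symm hne))).symm
  obtain ⟨x, hx, hx0⟩ := exists_derivative_eval_eq_zero (p := g.map φ) hlt
    (by rwa [eval_map]) (by rwa [eval_map])
  rw [derivative_map, eval_map] at hx0
  obtain ⟨e, he, rfl⟩ := hder.isRoot_of_eval₂_eq_zero hx0
  exact absurd (hiso e he (hθ.1.trans_le hx.1)) (hx.2.trans_lt hθ'.2).not_ge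

theorem eval₂_mul_neg_of_isolating {φ : F →+* R} {g : F[X]} {c d : F}
    (hder : RootsInRange φ (derivative g))
    (hiso : ∀ e, (derivative g).IsRoot e → φ c < φ e → φ d ≤ φ e) (hroot : ∀ e, ¬ g.IsRoot e)
    {θ : R} (hθ : θ ∈ Set.Ioo (φ c) (φ d)) (hg : g.eval₂ φ θ = 0) :
    φ (g.eval c * g.eval d) < 0 := by
  obtain ⟨q, hq⟩ : X - C θ ∣ g.map φ := dvd_iff_isRoot.mpr (by rwa [IsRoot.def, eval_map])
  have hφ (e : F) : φ (g.eval e) = (φ e - θ) * q.eval (φ e) := by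
    rw [← eval_map_apply, hq]
    simp
  have hq0 (x : R) (hx : x ∈ Set.Icc (φ c) (φ d)) : q.eval x ≠ 0 := by
    intro hx0
    have hgx : g.eval₂ φ x = 0 := by rw [← eval_map, hq, eval_mul, hx0, mul_zero]
    have hne (e : F) : φ e ≠ x := by
      rintro rfl
      exact hroot e ((map_eq_zero φ).mp (by rw [hφ, hx0, mul_zero]))
    obtain rfl := eq_of_eval₂_eq_zero_of_isolating hder hiso hθ
      ⟨hx.1.lt_of_ne (hne c), hx.2.lt_of_ne (hne d).symm⟩ hg hgx
    have hdθ : (derivative g).eval₂ φ θ = 0 := by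
      rw [← eval_map, ← derivative_map, hq]
      simp [hx0]
    obtain ⟨e, -, he⟩ := hder.isRoot_of_eval₂_eq_zero hdθ
    exact hne e he
  have hcd : φ c ≤ φ d := (hθ.1.trans hθ.2).le
  have hpos : 0 < q.eval (φ c) * q.eval (φ d) := by
    rw [← sign_eq_one_iff, sign_mul, sign_eval_eq_of_forall_ne_zero hcd hq0, ← sign_mul]
    exact sign_pos (mul_self_pos.mpr (hq0 _ ⟨hcd, le_rfl⟩))
  rw [map_mul, hφ, hφ]
  nlinarith [mul_pos (mul_pos (sub_pos.mpr hθ.1) (sub_pos.mpr hθ.2)) hpos]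

theorem SameSigns.exists_root_of_isolating {φ : F →+* R} {ψ : F →+* S} (hs : SameSigns φ ψ)
    {g : F[X]} {c d : F} (hder : RootsInRange φ (derivative g))
    (hiso : ∀ e, (derivative g).IsRoot e → φ c < φ e → φ d ≤ φ e) (hroot : ∀ e, ¬ g.IsRoot e)
    {θ : R} (hθ : θ ∈ Set.Ioo (φ c) (φ d)) (hg : g.eval₂ φ θ = 0) :
    ∃ η ∈ Set.Ioo (ψ c) (ψ d), g.eval₂ ψ η = 0 := by
  have hneg := hs.neg_iff.mp (eval₂_mul_neg_of_isolating hder hiso hroot hθ hg)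
  rw [map_mul, ← eval_map_apply, ← eval_map_apply] at hneg
  simpa only [eval_map] using
    HasPolynomialIVT.exists_root_of_mul_neg _ (hs.lt_iff.mp (hθ.1.trans hθ.2)) hneg

theorem SameSigns.same_cut_of_isolating {φ : F →+* R} {ψ : F →+* S} (hs : SameSigns φ ψ)
    {g : F[X]} {c d : F} (hφ : RootsInRange φ (derivative g)) (hψ : RootsInRange ψ (derivative g))
    (hiso : ∀ e, (derivative g).IsRoot e → φ c < φ e → φ d ≤ φ e) (hroot : ∀ e, ¬ g.IsRoot e)
    {θ : R} (hθ : θ ∈ Set.Ioo (φ c) (φ d)) (hg : g.eval₂ φ θ = 0)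
    {η : S} (hη : η ∈ Set.Ioo (ψ c) (ψ d)) (hgη : g.eval₂ ψ η = 0) (e : F) :
    (φ e < θ ∧ ψ e < η) ∨ (θ < φ e ∧ η < ψ e) := by
  have hle {a b : F} (h : φ a ≤ φ b) : ψ a ≤ ψ b := not_lt.mp fun h' => h.not_gt (hs.lt_iff.mpr h')
  have hisoψ (e : F) (he : (derivative g).IsRoot e) (h : ψ c < ψ e) : ψ d ≤ ψ e :=
    hle (hiso e he (hs.lt_iff.mpr h))
  have hunique {η' : S} (hη' : η' ∈ Set.Ioo (ψ c) (ψ d)) (hgη' : g.eval₂ ψ η' = 0) : η' = η :=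
    eq_of_eval₂_eq_zero_of_isolating hψ hisoψ hη' hη hgη' hgη
  rcases lt_trichotomy (φ e) θ with hlt | rfl | hgt
  · refine .inl ⟨hlt, ?_⟩
    rcases le_total (φ e) (φ c) with hec | hce
    · exact (hle hec).trans_lt hη.1
    · obtain ⟨η', hη', hgη'⟩ := hs.exists_root_of_isolating hφ
        (fun x hx h => hiso x hx (hce.trans_lt h)) hroot ⟨hlt, hθ.2⟩ hg
      exact hunique ⟨(hle hce).trans_lt hη'.1, hη'.2⟩ hgη' ▸ hη'.1
  · exact absurd ((map_eq_zero φ).mp (by rwa [eval₂_at_apply] at hg)) (hroot e)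
  · refine .inr ⟨hgt, ?_⟩
    rcases le_total (φ d) (φ e) with hde | hed
    · exact hη.2.trans_le (hle hde)
    · obtain ⟨η', hη', hgη'⟩ := hs.exists_root_of_isolating hφ
        (fun x hx h => hed.trans (hiso x hx h)) hroot ⟨hθ.1, hgt⟩ hg
      exact hunique ⟨hη'.1, hη'.2.trans_le (hle hed)⟩ hgη' ▸ hη'.2

theorem SameSigns.exists_root_of_minimal {φ : F →+* R} {ψ : F →+* S} (hs : SameSigns φ ψ)
    {g : F[X]} (hg0 : g ≠ 0) (hφ : ∀ h ≠ 0, h.natDegree < g.natDegree → RootsInRange φ h)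
    (hψ : ∀ h ≠ 0, h.natDegree < g.natDegree → RootsInRange ψ h) {θ : R}
    (hg : g.eval₂ φ θ = 0) (hθ : θ ∉ φ.range) :
    ∃ η, g.eval₂ ψ η = 0 ∧ ∀ e, (φ e < θ ∧ ψ e < η) ∨ (θ < φ e ∧ η < ψ e) := by
  have hdeg : g.natDegree ≠ 0 := (natDegree_pos_of_eval₂_root hg0 φ hg (by simp)).ne'
  have hroot (e : F) : ¬ g.IsRoot e := by
    intro he
    obtain ⟨q, rfl⟩ := dvd_iff_isRoot.mpr he
    have hq0 : q ≠ 0 := right_ne_zero_of_mul hg0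
    rw [eval₂_mul, eval₂_sub, eval₂_X, eval₂_C, mul_eq_zero, sub_eq_zero] at hg
    refine hθ (hg.elim (fun h => ⟨e, h.symm⟩) (hφ q hq0 ?_ θ))
    rw [natDegree_mul (X_sub_C_ne_zero e) hq0, natDegree_X_sub_C]
    lia
  classical
  have : CharZero F := φ.charZero
  have hder0 : derivative g ≠ 0 := mt derivative_eq_zero.mp hdeg
  have hderφ := hφ _ hder0 (natDegree_derivative_lt hdeg)
  have hderψ := hψ _ hder0 (natDegree_derivative_lt hdeg)
  obtain ⟨b, hb⟩ := exists_abs_lt_of_eval₂_eq_zero hg0 hg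
  obtain ⟨c, d, hc, hd, hiso⟩ := exists_isolating_interval hθ hb (derivative g).roots.toFinset
  replace hiso (e : F) (he : (derivative g).IsRoot e) : φ c < φ e → φ d ≤ φ e :=
    hiso e (by simpa [hder0] using he)
  obtain ⟨η, hη, hgη⟩ := hs.exists_root_of_isolating hderφ hiso hroot ⟨hc, hd⟩ hg
  exact ⟨η, hgη, hs.same_cut_of_isolating hderφ hderψ hiso hroot ⟨hc, hd⟩ hg hη hgη⟩

/-- Modulo `g` every polynomial has smaller degree, so all its roots lie in `F` and its sign at `θ`
is determined by the cut of `θ` in `F`. -/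
theorem SameSigns.exists_sign_eval₂_eq_of_minimal {φ : F →+* R} {ψ : F →+* S} (hs : SameSigns φ ψ)
    {g : F[X]} (hg0 : g ≠ 0) (hφ : ∀ h ≠ 0, h.natDegree < g.natDegree → RootsInRange φ h)
    (hψ : ∀ h ≠ 0, h.natDegree < g.natDegree → RootsInRange ψ h) {θ : R}
    (hg : g.eval₂ φ θ = 0) (hθ : θ ∉ φ.range) :
    ∃ η, ∀ h : F[X], SignType.sign (h.eval₂ φ θ) = SignType.sign (h.eval₂ ψ η) := by
  obtain ⟨η, hη, hcut⟩ := hs.exists_root_of_minimal hg0 hφ hψ hg hθ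
  refine ⟨η, fun h => ?_⟩
  have hdeg : g.natDegree ≠ 0 := (natDegree_pos_of_eval₂_root hg0 φ hg (by simp)).ne'
  have hmod : h.eval₂ φ θ = (h % g).eval₂ φ θ ∧ h.eval₂ ψ η = (h % g).eval₂ ψ η := by
    conv => enter [1, 1]; rw [← EuclideanDomain.div_add_mod h g]
    conv => enter [2, 1]; rw [← EuclideanDomain.div_add_mod h g]
    simp [eval₂_add, eval₂_mul, hg, hη]
  rw [hmod.1, hmod.2]
  rcases eq_or_ne (h % g) 0 with h0 | h0
  · simp [h0]
  · have hlt := natDegree_mod_lt h hdeg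
    exact hs.sign_eval₂_eq (hφ _ h0 hlt) (hψ _ h0 hlt) fun e _ => hcut e

end Isolation

/-- A pair of homomorphisms with the same signs which admits no proper extension with the same
signs to a simple extension of `F` inside `R × S`. -/
structure MaximalSameSigns {F R S : Type*} [Field F] [Field R] [LinearOrder R] [Field S]
    [LinearOrder S] (φ : F →+* R) (ψ : F →+* S) : Prop where
  sameSigns : SameSigns φ ψ
  mem_range : ∀ θ η, (∀ h : F[X],
    SignType.sign (h.eval₂ φ θ) = SignType.sign (h.eval₂ ψ η)) → θ ∈ φ.range ∧ η ∈ ψ.range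

section Maximal

variable {R S : Type*} [Field R] [LinearOrder R] [Field S] [LinearOrder S]

theorem MaximalSameSigns.symm {F : Type*} [Field F] {φ : F →+* R} {ψ : F →+* S}
    (hmax : MaximalSameSigns φ ψ) : MaximalSameSigns ψ φ where
  sameSigns := hmax.sameSigns.symm
  mem_range η θ h := (hmax.mem_range θ η fun p => (h p).symm).symm

theorem MaximalSameSigns.rootsInRange {F : Type*} [Field F] {φ : F →+* R} {ψ : F →+* S}
    [IsStrictOrderedRing R] [IsStrictOrderedRing S] [HasPolynomialIVT R] [HasPolynomialIVT S]
    (hmax : MaximalSameSigns φ ψ) {h : F[X]} (h0 : h ≠ 0) :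
    RootsInRange φ h ∧ RootsInRange ψ h := by
  induction hn : h.natDegree using Nat.strong_induction_on generalizing h with | _ n ih
  subst hn
  have hφ (q : F[X]) (hq : q ≠ 0) (hlt : q.natDegree < h.natDegree) := (ih _ hlt hq rfl).1
  have hψ (q : F[X]) (hq : q ≠ 0) (hlt : q.natDegree < h.natDegree) := (ih _ hlt hq rfl).2
  refine ⟨fun θ hθ => ?_, fun η hη => ?_⟩ <;> by_contra hmem
  · obtain ⟨η, hη⟩ := hmax.sameSigns.exists_sign_eval₂_eq_of_minimal h0 hφ hψ hθ hmem
    exact hmem (hmax.mem_range θ η hη).1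
  · obtain ⟨θ, hθ⟩ := hmax.symm.sameSigns.exists_sign_eval₂_eq_of_minimal h0 hψ hφ hη hmem
    exact hmem (hmax.symm.mem_range η θ hθ).1

theorem sameSigns_of_isFractionRing {D F : Type*} [CommRing D] [Field F] [Algebra D F]
    [IsFractionRing D F] [IsStrictOrderedRing R] [IsStrictOrderedRing S] {φ : F →+* R} {ψ : F →+* S}
    (hs : SameSigns (φ.comp (algebraMap D F)) (ψ.comp (algebraMap D F))) : SameSigns φ ψ := by
  intro x
  obtain ⟨a, b, -, rfl⟩ := IsFractionRing.div_surjective (A := D) x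
  have ha := hs a
  have hb := hs b
  simp only [RingHom.comp_apply, ← signHom_apply] at ha hb ⊢
  rw [map_div₀ φ, map_div₀ ψ, map_div₀, map_div₀, ha, hb]

theorem exists_maximal_subring {D : Type*} [CommRing D] {φ₀ : D →+* R} {ψ₀ : D →+* S}
    (hs : SameSigns φ₀ ψ₀) :
    ∃ P : Subring (R × S), (φ₀.prod ψ₀).range ≤ P ∧
      Maximal (fun P : Subring (R × S) => ∀ p ∈ P, SignType.sign p.1 = SignType.sign p.2) P := by
  refine zorn_le_nonempty₀ {P : Subring (R × S) | ∀ p ∈ P, SignType.sign p.1 = SignType.sign p.2}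
    (fun c hc hchain P hP => ⟨sSup c, fun p hp => ?_, fun _ => le_sSup⟩) _ ?_
  · obtain ⟨Q, hQ, hpQ⟩ := (Subring.mem_sSup_of_directedOn ⟨P, hP⟩ hchain.directedOn).mp hp
    exact hc hQ p hpQ
  · rintro _ ⟨a, rfl⟩
    exact hs a

theorem SameSigns.exists_maximal_extension {D : Type*} {R : Type u} {S : Type v} [CommRing D]
    [Field R] [LinearOrder R] [IsStrictOrderedRing R] [Field S] [LinearOrder S]
    [IsStrictOrderedRing S] {φ₀ : D →+* R} {ψ₀ : D →+* S}
    (hs : SameSigns φ₀ ψ₀) :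
    ∃ (F : Type (max u v)) (_ : Field F) (ι : D →+* F) (φ : F →+* R) (ψ : F →+* S),
      φ.comp ι = φ₀ ∧ ψ.comp ι = ψ₀ ∧ MaximalSameSigns φ ψ := by
  obtain ⟨P, hDP, hP⟩ := exists_maximal_subring hs
  let fst : P →+* R := (RingHom.fst R S).comp P.subtype
  let snd : P →+* S := (RingHom.snd R S).comp P.subtype
  have hfs : SameSigns fst snd := fun p => hP.prop p p.2
  have hfst : Function.Injective fst := (injective_iff_map_eq_zero fst).mpr fun p hp =>
    Subtype.ext (Prod.ext hp (sign_eq_zero_iff.mp ((hfs p).symm.trans (by simp [hp]))))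
  have hsnd : Function.Injective snd := (injective_iff_map_eq_zero snd).mpr fun p hp =>
    Subtype.ext (Prod.ext (sign_eq_zero_iff.mp ((hfs p).trans (by simp [hp]))) hp)
  have : IsDomain P := hfst.isDomain fst
  let F := FractionRing P
  let φ : F →+* R := IsFractionRing.lift hfst
  let ψ : F →+* S := IsFractionRing.lift hsnd
  have hφ (p : P) : φ (algebraMap P F p) = fst p := IsFractionRing.lift_algebraMap hfst p
  have hψ (p : P) : ψ (algebraMap P F p) = snd p := IsFractionRing.lift_algebraMap hsnd p
  have hφψ : SameSigns φ ψ := sameSigns_of_isFractionRing (D := P) fun p => by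
    simpa only [RingHom.comp_apply, hφ, hψ] using hfs p
  refine ⟨F, inferInstance,
    (algebraMap P F).comp ((φ₀.prod ψ₀).codRestrict P fun x => hDP ⟨x, rfl⟩), φ, ψ,
    RingHom.ext fun x => hφ _, RingHom.ext fun x => hψ _, hφψ, fun θ η hθη => ?_⟩
  let ev : F[X] →+* R × S := (eval₂RingHom φ θ).prod (eval₂RingHom ψ η)
  have hle : P ≤ ev.range := fun p hp => ⟨C (algebraMap P F ⟨p, hp⟩), by
    simp [ev, hφ, hψ, fst, snd]⟩
  have hmem : (θ, η) ∈ P := hP.le_of_ge (by rintro _ ⟨h, rfl⟩; exact hθη h) hle ⟨X, by simp [ev]⟩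
  exact ⟨⟨algebraMap P F ⟨_, hmem⟩, hφ _⟩, ⟨algebraMap P F ⟨_, hmem⟩, hψ _⟩⟩

end Maximal

/-! ### Specialization to the base field -/

/-- The diagonal embedding of a ring in its ring of germs. -/
def germDiag {α : Type*} (l : Filter α) (k : Type*) [CommRing k] : k →+* l.Germ k :=
  (Filter.Germ.coeRingHom l).comp (Pi.constRingHom α k)

theorem eval₂_germDiag_coe {α : Type*} (l : Filter α) {k : Type*} [CommRing k] (h : k[X])
    (a : α → k) : h.eval₂ (germDiag l k) a = ((fun i => h.eval (a i) : α → k) : l.Germ k) := by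
  have heval : h.eval₂ (Pi.constRingHom α k) a = fun i => h.eval (a i) := by
    ext i
    exact hom_eval₂ h (Pi.constRingHom α k) (Pi.evalRingHom (fun _ => k) i) a
  rw [← heval]
  exact (hom_eval₂ h (Pi.constRingHom α k) (Filter.Germ.coeRingHom l) a).symm

theorem sign_germ_eq {α k : Type*} [Field k] [LinearOrder k] {U : Ultrafilter α} {a : α → k}
    {σ : SignType} (h : ∀ᶠ i in U, SignType.sign (a i) = σ) :
    SignType.sign (a : (U : Filter α).Germ k) = σ := by
  cases σ
  · exact sign_eq_zero_iff.mpr (Filter.Germ.coe_eq.mpr (h.mono fun i => sign_eq_zero_iff.mp))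
  · exact sign_eq_neg_one_iff.mpr (Filter.Germ.coe_lt.mpr (h.mono fun i => sign_eq_neg_one_iff.mp))
  · exact sign_eq_one_iff.mpr (Filter.Germ.coe_lt.mpr (h.mono fun i => sign_eq_one_iff.mp))

theorem nonempty_algHom_of_germ {α κ k A : Type*} [CommRing κ] [CommRing k] [CommRing A]
    [Algebra κ k] [Algebra κ A] [Algebra.FinitePresentation κ A] {l : Filter α} [l.NeBot]
    (ρ : A →+* l.Germ k)
    (hρ : ρ.comp (algebraMap κ A) = (germDiag l k).comp (algebraMap κ k)) :
    Nonempty (A →ₐ[κ] k) := by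
  obtain ⟨n, π, hπ, s, hs⟩ := Algebra.FinitePresentation.out (R := κ) (A := A)
  choose c hc using fun i => (ρ (π (MvPolynomial.X i))).exists_rep
  have hlift : ((Filter.Germ.coeRingHom l).comp
      (MvPolynomial.aeval (R := κ) c : MvPolynomial (Fin n) κ →ₐ[κ] (α → k)).toRingHom) =
      ρ.comp π.toRingHom := by
    refine MvPolynomial.ringHom_ext (fun r => ?_) fun i => ?_
    · simpa using! (RingHom.congr_fun hρ r).symm
    · simpa using! hc i
  have hker : ∀ᶠ i in l, ∀ p ∈ s, MvPolynomial.aeval (fun j => c j i) p = 0 := by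
    refine (Filter.eventually_all_finset s).mpr fun p hp => ?_
    have hp0 : π p = 0 := (RingHom.mem_ker (f := π.toRingHom)).mp (hs ▸ Ideal.subset_span hp)
    have hgerm : ((MvPolynomial.aeval c p : α → k) : l.Germ k) = (0 : α → k) :=
      (RingHom.congr_fun hlift p).trans (by simp [hp0])
    filter_upwards [Filter.Germ.coe_eq.mp hgerm] with i hi
    exact (MvPolynomial.comp_aeval_apply c (Pi.evalAlgHom κ (fun _ : α => k) i) p).symm.trans hi
  obtain ⟨i, hi⟩ := hker.exists
  have hle : RingHom.ker π.toRingHom ≤ RingHom.ker (MvPolynomial.aeval (R := κ) fun j => c j i) :=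
    hs ▸ Ideal.span_le.mpr hi
  exact ⟨π.liftOfSurjective hπ (MvPolynomial.aeval fun j => c j i) hle⟩

theorem rootsInRange_of_hasPolynomialIVT {k R : Type*} [Field k] [LinearOrder k]
    [IsStrictOrderedRing k] [HasPolynomialIVT k] [Field R] [LinearOrder R] [IsStrictOrderedRing R]
    [HasPolynomialIVT R] (f : k →+* R) {h : k[X]} (h0 : h ≠ 0) : RootsInRange f h := by
  have hs : SameSigns f (RingHom.id k) := sign_ringHom f
  obtain ⟨F, _, ι, φ, ψ, rfl, hψ, hmax⟩ := hs.exists_maximal_extension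
  have hroots := (hmax.rootsInRange ((Polynomial.map_ne_zero_iff ι.injective).mpr h0)).1
  intro θ hθ
  obtain ⟨x, rfl⟩ := hroots θ (by rwa [eval₂_map])
  exact ⟨ψ x, congrArg φ (ψ.injective (RingHom.congr_fun hψ (ψ x)))⟩

theorem hasPolynomialIVT_of_rootsInRange {k R : Type*} [Field k] [LinearOrder k] [Field R]
    [LinearOrder R] [HasPolynomialIVT R] {f : k →+* R} (hf : StrictMono f)
    (hroots : ∀ h ≠ 0, RootsInRange f h) :
    HasPolynomialIVT k where
  exists_root_of_mul_neg p a b hab hneg := by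
    have hp0 : p ≠ 0 := by rintro rfl; simp at hneg
    have hneg' : (p.map f).eval (f a) * (p.map f).eval (f b) < 0 := by
      rw [eval_map_apply, eval_map_apply, ← map_mul, ← map_zero f]
      exact hf hneg
    obtain ⟨θ, hθ, hθ0⟩ := HasPolynomialIVT.exists_root_of_mul_neg _ (hf hab) hneg'
    obtain ⟨c, hc, rfl⟩ := (hroots p hp0).isRoot_of_eval₂_eq_zero (by rwa [← eval_map])
    exact ⟨c, ⟨hf.lt_iff_lt.mp hθ.1, hf.lt_iff_lt.mp hθ.2⟩, hc⟩

section Cut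

variable {k R : Type*} [Field k] [LinearOrder k] [IsStrictOrderedRing k] [HasPolynomialIVT k]
  [Field R] [LinearOrder R] [IsStrictOrderedRing R]

theorem strictMono_ringHom (f : k →+* R) : StrictMono f := fun a b hab => by
  rw [← sub_pos, ← map_sub, ← sign_eq_one_iff, sign_ringHom f]
  exact sign_pos (sub_pos.mpr hab)

theorem exists_same_cut_finset (f : k →+* R) {x : R} (hx : x ∉ f.range) (s : Finset k) :
    ∃ a : k, ∀ e ∈ s, (f e < x ∧ e < a) ∨ (x < f e ∧ a < e) := by
  classical
  obtain ⟨a, hlo, hhi⟩ := Order.exists_between_finsets (s.filter fun e => f e < x)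
    (s.filter fun e => x < f e) fun e he e' he' => by
      simp only [Finset.mem_filter] at he he'
      exact (strictMono_ringHom f).lt_iff_lt.mp (he.2.trans he'.2)
  refine ⟨a, fun e he => ?_⟩
  rcases lt_or_gt_of_ne (fun h => hx ⟨e, h⟩ : f e ≠ x) with h | h
  · exact .inl ⟨h, hlo e (Finset.mem_filter.mpr ⟨he, h⟩)⟩
  · exact .inr ⟨h, hhi e (Finset.mem_filter.mpr ⟨he, h⟩)⟩

theorem exists_germ_sign_eval₂_eq [HasPolynomialIVT R] (f : k →+* R) (x : R) :
    ∃ (U : Ultrafilter (Finset k)) (η : (U : Filter (Finset k)).Germ k), ∀ h : k[X],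
      SignType.sign (h.eval₂ f x) =
        SignType.sign (h.eval₂ (germDiag (U : Filter (Finset k)) k) η) := by
  classical
  refine ⟨.of .atTop, ?_⟩
  by_cases hx : x ∈ f.range
  · obtain ⟨a, rfl⟩ := hx
    refine ⟨germDiag _ k a, fun h => ?_⟩
    rw [eval₂_at_apply, eval₂_at_apply, sign_ringHom, sign_ringHom]
  choose a ha using exists_same_cut_finset f hx
  refine ⟨a, fun h => ?_⟩
  rw [eval₂_germDiag_coe]
  refine (sign_germ_eq ?_).symm
  filter_upwards [Ultrafilter.of_le _ (Filter.eventually_ge_atTop h.roots.toFinset)] with s hs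
  rcases eq_or_ne h 0 with rfl | h0
  · simp
  have hsame : SameSigns f (RingHom.id k) := sign_ringHom f
  exact (hsame.sign_eval₂_eq (rootsInRange_of_hasPolynomialIVT f h0) (fun θ _ => ⟨θ, rfl⟩)
    fun e he => ha s e (hs (by simpa [h0] using he))).symm

end Cut

instance intermediateField_isStrictOrderedRing {κ R : Type*} [Field κ] [Field R] [LinearOrder R]
    [IsStrictOrderedRing R] [Algebra κ R] (k : IntermediateField κ R) : IsStrictOrderedRing k :=
  inferInstanceAs (IsStrictOrderedRing k.toSubfield)

section Specialization

variable {κ R A : Type*} [Field κ] [Field R] [LinearOrder R] [IsStrictOrderedRing R]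
  [HasPolynomialIVT R] [Algebra κ R] [CommRing A] [Algebra κ A]

variable (A) in
theorem exists_intermediateField_mem [Algebra.FinitePresentation κ A] {k : Type*} [Field k]
    [LinearOrder k] [IsStrictOrderedRing k] [HasPolynomialIVT k] [Algebra κ k]
    (f : k →ₐ[κ] R) (x : R) :
    ∃ k' : IntermediateField κ R, f.fieldRange ≤ k' ∧ x ∈ k' ∧ HasPolynomialIVT k' ∧
      (Nonempty (A →ₐ[κ] k') → Nonempty (A →ₐ[κ] k)) := by
  obtain ⟨U, η, hη⟩ := exists_germ_sign_eval₂_eq f.toRingHom x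
  have hs : SameSigns (eval₂RingHom f.toRingHom x)
      (eval₂RingHom (germDiag (U : Filter (Finset k)) k) η) := hη
  obtain ⟨F, _, ι, φ, ψ, hφ, hψ, hmax⟩ := hs.exists_maximal_extension
  have hφC (a : k) : φ (ι (C a)) = f a := by simpa using! RingHom.congr_fun hφ (C a)
  have hψC (a : k) : ψ (ι (C a)) = germDiag (U : Filter (Finset k)) k a := by
    simpa using! RingHom.congr_fun hψ (C a)
  let : Algebra κ F := ((ι.comp C).comp (algebraMap κ k)).toAlgebra
  let φ' : F →ₐ[κ] R := { φ with commutes' := fun r => (hφC _).trans (f.commutes r) }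
  have hroots (h : φ'.fieldRange[X]) (h0 : h ≠ 0) :
      RootsInRange (algebraMap φ'.fieldRange R) h := by
    obtain ⟨g, rfl⟩ := Polynomial.map_surjective φ'.equivFieldRange.toRingHom
      φ'.equivFieldRange.surjective h
    intro θ hθ
    obtain ⟨y, rfl⟩ := (hmax.rootsInRange (h := g) (by rintro rfl; simp at h0)).1 θ
      (by rwa [eval₂_map] at hθ)
    exact ⟨⟨φ y, y, rfl⟩, rfl⟩
  refine ⟨φ'.fieldRange, ?_, ⟨ι X, ?_⟩,
    hasPolynomialIVT_of_rootsInRange (Subtype.strictMono_coe _) hroots, fun ⟨g⟩ => ?_⟩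
  · rintro _ ⟨a, rfl⟩
    exact ⟨ι (C a), hφC a⟩
  · simpa using! RingHom.congr_fun hφ X
  · refine nonempty_algHom_of_germ
      (ψ.comp ((φ'.equivFieldRange.symm : φ'.fieldRange →ₐ[κ] F).comp g).toRingHom) ?_
    ext r
    exact (congrArg ψ (AlgHom.commutes _ r)).trans (hψC _)

variable [LinearOrder κ] [IsStrictOrderedRing κ] [HasPolynomialIVT κ]

variable (A) in
theorem exists_intermediateField_superset [Algebra.FinitePresentation κ A] (s : Finset R) :
    ∃ k : IntermediateField κ R, ↑s ⊆ (k : Set R) ∧ HasPolynomialIVT k ∧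
      (Nonempty (A →ₐ[κ] k) → Nonempty (A →ₐ[κ] κ)) := by
  classical
  induction s using Finset.induction_on with
  | empty =>
    obtain ⟨k, -, -, hk, hA⟩ := exists_intermediateField_mem A (Algebra.ofId κ R) 0
    exact ⟨k, by simp, hk, hA⟩
  | insert x s _ ih =>
    obtain ⟨k, hs, _, hA⟩ := ih
    obtain ⟨k', hkk', hx, hk', hA'⟩ := exists_intermediateField_mem A k.val x
    rw [k.fieldRange_val] at hkk'
    refine ⟨k', ?_, hk', hA ∘ hA'⟩
    rw [Finset.coe_insert, Set.insert_subset_iff]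
    exact ⟨hx, hs.trans hkk'⟩

theorem nonempty_algHom_of_algHom [Algebra.FiniteType κ A] (g : A →ₐ[κ] R) :
    Nonempty (A →ₐ[κ] κ) := by
  classical
  have : Algebra.FinitePresentation κ A := Algebra.FinitePresentation.of_finiteType.mp inferInstance
  obtain ⟨t, ht⟩ := Algebra.FiniteType.out (R := κ) (A := A)
  obtain ⟨k, hk, -, hA⟩ := exists_intermediateField_superset A (κ := κ) (t.image g)
  have hrange : g.range ≤ k.toSubalgebra := by
    rw [← Algebra.map_top, ← ht, AlgHom.map_adjoin, Algebra.adjoin_le_iff]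
    simpa using! hk
  exact hA ⟨(Subalgebra.inclusion hrange).comp g.rangeRestrict⟩

end Specialization

/-! ### The real Nullstellensatz -/

section FormallyReal

theorem exists_isSumSq_algebraMap_eq {A B : Type*} [CommRing A] [CommRing B] [Algebra A B]
    (M : Submonoid A) [IsLocalization M B] {s : B} (hs : IsSumSq s) :
    ∃ r, ∃ m ∈ M, IsSumSq r ∧ algebraMap A B r = algebraMap A B (m * m) * s := by
  induction hs with
  | zero => exact ⟨0, 1, M.one_mem, .zero, by simp⟩
  | sq_add z _ ih =>
    obtain ⟨r, m, hm, hr, hrs⟩ := ih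
    obtain ⟨⟨a, n⟩, hz⟩ := IsLocalization.surj M z
    refine ⟨m * a * (m * a) + n * n * r, m * n, M.mul_mem hm n.2,
      ((IsSumSq.mul_self (n : A)).mul hr).sq_add _, ?_⟩
    simp only [map_add, map_mul] at hrs hz ⊢
    rw [← hz, hrs]
    ring

theorem isFormallyReal_of_isLocalization {A B : Type*} [CommRing A] [CommRing B] [Algebra A B]
    [IsFormallyReal A] (M : Submonoid A) [IsLocalization M B] : IsFormallyReal B := by
  refine .of_eq_zero_of_eq_zero_of_mul_self_add fun {s z} hs h => ?_
  obtain ⟨r, m, hm, hr, hrs⟩ := exists_isSumSq_algebraMap_eq M hs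
  obtain ⟨⟨a, n⟩, hz⟩ := IsLocalization.surj M z
  simp only [map_mul] at hrs hz
  have h0 : algebraMap A B (m * a * (m * a) + n * n * r) = 0 := by
    simp only [map_add, map_mul, ← hz, hrs]
    linear_combination (algebraMap A B m * algebraMap A B n) ^ 2 * h
  obtain ⟨c, hc⟩ := (IsLocalization.map_eq_zero_iff M B _).mp h0
  have hsum : c * m * a * (c * m * a) + c * n * (c * n) * r = 0 := by
    linear_combination (c : A) * hc
  have hzero : c * m * a = 0 := pow_eq_zero_iff two_ne_zero |>.mp <| (sq _).trans <|
    IsFormallyReal.eq_zero_of_add_right (.mul_self _) ((IsSumSq.mul_self _).mul hr) hsum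
  have hunit {x : A} (hx : x ∈ M) : IsUnit (algebraMap A B x) := IsLocalization.map_units B ⟨x, hx⟩
  rw [← (hunit n.2).mul_left_eq_zero, hz, ← (hunit (M.mul_mem c.2 hm)).mul_right_eq_zero, ← map_mul,
    hzero, map_zero]

instance isSemireal_of_isFormallyReal {A : Type*} [CommRing A] [Nontrivial A] [IsFormallyReal A] :
    IsSemireal A where
  one_add_ne_zero hs h := one_ne_zero
    (IsFormallyReal.eq_zero_of_add_right (mul_one (1 : A) ▸ .mul_self 1) hs h)

theorem exists_ringHom_isSemireal {A : Type u} [CommRing A] [IsFormallyReal A] {f : A}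
    (hf : f ≠ 0) :
    ∃ (K : Type u) (_ : Field K) (_ : IsSemireal K) (g : A →+* K), g f ≠ 0 := by
  obtain ⟨p, hp, hfp⟩ : ∃ p ∈ minimalPrimes A, f ∉ p := by
    by_contra! h
    have hmem : f ∈ nilradical A := by
      rw [nilradical, ← Ideal.sInf_minimalPrimes]
      exact Ideal.mem_sInf.mpr @h
    exact hf (by simpa using hmem)
  have := hp.1.1
  have : Ring.KrullDimLE 0 (Localization.AtPrime p) := .of_isLocalization p hp _
  have := isFormallyReal_of_isLocalization (B := Localization.AtPrime p) p.primeCompl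
  exact ⟨_, Ring.KrullDimLE.isField_of_isReduced.toField, isSemireal_of_isFormallyReal,
    algebraMap A (Localization.AtPrime p),
    (IsLocalization.map_units _ (⟨f, hfp⟩ : p.primeCompl)).ne_zero⟩

theorem exists_algHom_apply_ne_zero {κ A : Type*} [Field κ] [LinearOrder κ] [IsStrictOrderedRing κ]
    [HasPolynomialIVT κ] [CommRing A] [Algebra κ A] [Algebra.FiniteType κ A] [IsFormallyReal A]
    {f : A} (hf : f ≠ 0) : ∃ χ : A →ₐ[κ] κ, χ f ≠ 0 := by
  obtain ⟨K, _, _, g, hg⟩ := exists_ringHom_isSemireal hf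
  obtain ⟨R, _, _, _, _, ⟨e⟩⟩ := exists_ringHom_hasPolynomialIVT (K := K)
  let : Algebra κ R := ((e.comp g).comp (algebraMap κ A)).toAlgebra
  let ρ : A →ₐ[κ] R := { e.comp g with commutes' := fun _ => rfl }
  have hunit (y : Submonoid.powers f) : IsUnit (ρ y) := by
    obtain ⟨_, n, rfl⟩ := y
    exact map_pow ρ f n ▸ (((map_ne_zero e).mpr hg).isUnit.pow n : IsUnit (ρ f ^ n))
  obtain ⟨χ⟩ := nonempty_algHom_of_algHom
    (IsLocalization.liftAlgHom hunit : Localization.Away f →ₐ[κ] R)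
  exact ⟨χ.comp (IsScalarTower.toAlgHom κ A (Localization.Away f)),
    ((IsLocalization.Away.algebraMap_isUnit f).map χ).ne_zero⟩

end FormallyReal

/-! ### Positive functionals -/

section PositiveFunctional

variable {κ A : Type*} [Field κ] [LinearOrder κ] [IsStrictOrderedRing κ] [CommRing A] [Algebra κ A]

/-- The radical of the form `(a, b) ↦ L (a * b)`, i.e. the largest ideal on which `L` vanishes. -/
def nullIdeal {κ A : Type*} [CommRing κ] [CommRing A] [Algebra κ A] (L : A →ₗ[κ] κ) : Ideal A where
  carrier := {a | ∀ b, L (a * b) = 0}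
  add_mem' ha hb c := by rw [add_mul, map_add, ha, hb, add_zero]
  zero_mem' b := by rw [zero_mul, map_zero]
  smul_mem' c a ha b := by rw [smul_eq_mul, mul_comm c, mul_assoc, ha]

theorem mem_nullIdeal_of_apply_sq_eq_zero {L : A →ₗ[κ] κ} (hsq : ∀ a, 0 ≤ L (a ^ 2)) {a : A}
    (ha : L (a ^ 2) = 0) : a ∈ nullIdeal L := by
  let B : LinearMap.BilinForm κ A := (LinearMap.mul κ A).compr₂ L
  have hsymm : LinearMap.IsSymm B := ⟨fun x y => congrArg L (mul_comm x y)⟩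
  have hB (x : A) : B x x = L (x ^ 2) := congrArg L (sq x).symm
  have hker : a ∈ LinearMap.ker B :=
    (B.apply_apply_same_eq_zero_iff (fun x => hB x ▸ hsq x) hsymm).mp (hB a ▸ ha)
  exact fun b => LinearMap.congr_fun (LinearMap.mem_ker.mp hker) b

theorem isFormallyReal_quotient_nullIdeal {L : A →ₗ[κ] κ} (hsq : ∀ a, 0 ≤ L (a ^ 2)) :
    IsFormallyReal (A ⧸ nullIdeal L) := by
  refine .of_eq_zero_of_eq_zero_of_mul_self_add fun {s x} hs h => ?_
  obtain ⟨a, rfl⟩ := Ideal.Quotient.mk_surjective x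
  obtain ⟨r, hr, rfl⟩ := exists_isSumSq_of_surjective Ideal.Quotient.mk_surjective hs
  have hr0 : 0 ≤ L r := by
    clear h hs
    induction hr with
    | zero => rw [map_zero]
    | sq_add b _ ih => exact map_add L _ _ ▸ add_nonneg (sq b ▸ hsq b) ih
  rw [← map_mul, ← map_add, Ideal.Quotient.eq_zero_iff_mem] at h
  have hsum : L (a ^ 2) + L r = 0 := by simpa [sq] using h 1
  exact Ideal.Quotient.eq_zero_iff_mem.mpr
    (mem_nullIdeal_of_apply_sq_eq_zero hsq (by linarith [hsq a]))

end PositiveFunctional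

end RealRadical

open RealRadical in
theorem positive_functional_vanishes_on_character_radical_general
    {κ A : Type*} [Field κ] [LinearOrder κ] [IsStrictOrderedRing κ] [HasPolynomialIVT κ]
    [CommRing A] [Algebra κ A] (hfg : Algebra.FiniteType κ A) (I : Ideal A) (L : A →ₗ[κ] κ)
    (hsq : ∀ a : A, 0 ≤ L (a ^ 2)) (hI : ∀ b ∈ I, L b = 0)
    (f : A) (hf : ∀ χ : A →ₐ[κ] κ, (∀ b ∈ I, χ b = 0) → χ f = 0) :
    L f = 0 := by
  have := isFormallyReal_quotient_nullIdeal hsq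
  have hIN : I ≤ nullIdeal L := fun b hb c => hI _ (I.mul_mem_right c hb)
  suffices hfN : f ∈ nullIdeal L by simpa using hfN 1
  by_contra hfN
  obtain ⟨χ, hχ⟩ := exists_algHom_apply_ne_zero (κ := κ) (A := A ⧸ nullIdeal L)
    (mt Ideal.Quotient.eq_zero_iff_mem.mp hfN)
  refine hχ (hf (χ.comp (Ideal.Quotient.mkₐ κ (nullIdeal L))) fun b hb => ?_)
  simp [Ideal.Quotient.eq_zero_iff_mem.mpr (hIN hb)]

/-- **Positive functionals vanishing on an ideal vanish on its "character
radical".**  Let `A` be a finitely generated commutative real unital algebra,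
`I` an ideal of `A`, and `L` a linear functional on `A` that is nonnegative on
all squares and vanishes on `I`.  If `f ∈ A` is annihilated by every character
of `A` (unital `ℝ`-algebra homomorphism `A → ℝ`) vanishing on `I`, then
`L f = 0`.  In particular `L` vanishes on the ideal
`Î = {f : χ f = 0 for every character χ vanishing on I}`. -/
theorem positive_functional_vanishes_on_character_radical
    {A : Type*} [CommRing A] [Algebra ℝ A] (hfg : Algebra.FiniteType ℝ A)
    (I : Ideal A) (L : A →ₗ[ℝ] ℝ)
    (hsq : ∀ a : A, 0 ≤ L (a ^ 2)) (hI : ∀ b ∈ I, L b = 0)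
    (f : A) (hf : ∀ χ : A →ₐ[ℝ] ℝ, (∀ b ∈ I, χ b = 0) → χ f = 0) :
    L f = 0 :=
  positive_functional_vanishes_on_character_radical_general hfg I L hsq hI f hf
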